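/- Let c : M → ℝ be a family of coefficients indexed by multi-indices, let 0 < q < ∞, δ > 0 and M₀ ≥ 0. Suppose that for every finitely supported sequence z : ℕ₊ → ℂ with ∑_{α∈M, α≠0} |z^α|² (2ℕ)^{qα} < δ², the series ∑_{α∈M} c_α z^α converges absolutely and satisfies |∑_{α∈M} c_α z^α| ≤ M₀. Then there exists a real number r > 0 such that ∑_{α∈M} c_α² (2ℕ)^{−rα} < ∞. (Characterization theorem: a power series in infinitely many complex variables that converges absolutely and is bounded on the neighborhood B_q(δ) is the Hermite transform of a Kondratiev distribution.) -/

import Mathlib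

/-! Fix `s` large and let `w_j = (2j)^{-s}`. Since `∑_α (2ℕ)^{-2α}` converges
(`summable_twoNpow_neg_two`) and `(2ℕ)^α ≥ 2` for `α ≠ 0`, every finitely supported `z` with
`|z_j| ≤ w_j` satisfies `∑_{α ≠ 0} |z^α|² (2ℕ)^{qα} < δ²` once `s` is large enough. For a given
multi-index `α` the hypothesis therefore holds on the whole torus
`{z : |z_j| = w_j for j ∈ supp α, z_j = 0 otherwise}`, and integrating the power series against the
character of exponent `α` isolates a single coefficient (`cauchy_estimate`):
`|c_α| (2ℕ)^{-sα} ≤ M₀`. Hence `c_α² (2ℕ)^{-(2s+2)α} ≤ M₀² (2ℕ)^{-2α}`, which is summable. -/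

open scoped BigOperators

/-- A multi-index: a finitely supported function `ℕ₊ → ℕ`. -/
abbrev MultiIndex := ℕ+ →₀ ℕ

/-- For a multi-index `α` and a real number `c`,
`(2ℕ)^{cα} = ∏_j (2j)^{c·α(j)}` (a finite product over the support of `α`). -/
noncomputable def twoNpow (c : ℝ) (α : MultiIndex) : ℝ :=
  α.prod fun j n => (2 * (j : ℝ)) ^ (c * (n : ℝ))

/-- For a finitely supported sequence `z : ℕ₊ → ℂ` and a multi-index `α`,
`z^α = ∏_{j} z(j)^{α(j)}` (a finite product). -/
noncomputable def zpowM (z : ℕ+ →₀ ℂ) (α : MultiIndex) : ℂ :=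
  α.prod fun j n => z j ^ n

lemma two_mul_pnat_pos (j : ℕ+) : (0 : ℝ) < 2 * (j : ℝ) := by
  have : (0 : ℝ) < (j : ℝ) := by exact_mod_cast j.pos
  positivity

lemma two_le_two_mul_pnat (j : ℕ+) : (2 : ℝ) ≤ 2 * (j : ℝ) := by
  have : (1 : ℝ) ≤ (j : ℝ) := by exact_mod_cast j.pos
  linarith

lemma twoNpow_pos (c : ℝ) (α : MultiIndex) : 0 < twoNpow c α :=
  Finset.prod_pos fun j _ => Real.rpow_pos_of_pos (two_mul_pnat_pos j) _

lemma twoNpow_add (a b : ℝ) (α : MultiIndex) :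
    twoNpow (a + b) α = twoNpow a α * twoNpow b α := by
  simp only [twoNpow, Finsupp.prod, ← Finset.prod_mul_distrib]
  refine Finset.prod_congr rfl fun j _ => ?_
  rw [← Real.rpow_add (two_mul_pnat_pos j), add_mul]

lemma twoNpow_eq_prod_pow (c : ℝ) (α : MultiIndex) :
    twoNpow c α = α.prod fun j n => ((2 * (j : ℝ)) ^ c) ^ n :=
  Finset.prod_congr rfl fun j _ => Real.rpow_mul_natCast (two_mul_pnat_pos j).le _ _

/-- The decay that makes the sum over `α ≠ 0` small: `(2ℕ)^{mα} ≥ 2^m` for `α ≠ 0`. -/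
lemma twoNpow_neg_le {m : ℝ} (hm : 0 ≤ m) {α : MultiIndex} (hα : α ≠ 0) :
    twoNpow (-m) α ≤ (2 : ℝ) ^ (-m) := by
  obtain ⟨i, hi⟩ := Finsupp.support_nonempty_iff.mpr hα
  have hle : ∀ j ∈ α.support, (2 * (j : ℝ)) ^ (-m * (α j : ℝ)) ≤ (2 : ℝ) ^ (-m) := by
    intro j hj
    have h1 : (1 : ℝ) ≤ α j := by
      exact_mod_cast Nat.one_le_iff_ne_zero.mpr (Finsupp.mem_support_iff.mp hj)
    calc (2 * (j : ℝ)) ^ (-m * (α j : ℝ)) ≤ (2 : ℝ) ^ (-m * (α j : ℝ)) :=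
          Real.rpow_le_rpow_of_nonpos (by norm_num) (two_le_two_mul_pnat j) (by nlinarith)
      _ ≤ (2 : ℝ) ^ (-m) := Real.rpow_le_rpow_of_exponent_le (by norm_num) (by nlinarith)
  have h21 : (2 : ℝ) ^ (-m) ≤ 1 := Real.rpow_le_one_of_one_le_of_nonpos (by norm_num) (by linarith)
  rw [twoNpow, Finsupp.prod, ← Finset.mul_prod_erase _ _ hi]
  have h0 : ∀ j : ℕ+, 0 ≤ (2 * (j : ℝ)) ^ (-m * (α j : ℝ)) := fun j =>
    (Real.rpow_pos_of_pos (two_mul_pnat_pos j) _).le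
  calc _ ≤ (2 : ℝ) ^ (-m) * 1 := by
        refine mul_le_mul (hle i hi) ?_ (Finset.prod_nonneg fun j _ => h0 j) (by positivity)
        exact Finset.prod_le_one (fun j _ => h0 j) fun j hj =>
          (hle j (Finset.mem_of_mem_erase hj)).trans h21
    _ = _ := mul_one _

/-- Multivariable geometric series: `∑_α x^α ≤ ∏_j (1 - x_j)⁻¹`, bounded by `exp (2 ∑_j x_j)`. -/
lemma summable_finsupp_prod_pow {x : ℕ+ → ℝ} (h0 : ∀ j, 0 ≤ x j) (h1 : ∀ j, x j ≤ 1 / 2)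
    (hx : Summable x) : Summable fun α : MultiIndex => α.prod fun j n => x j ^ n := by
  classical
  refine summable_of_sum_le (c := Real.exp (2 * ∑' j, x j))
    (fun α => Finset.prod_nonneg fun j _ => pow_nonneg (h0 j) _) fun T => ?_
  -- The box of multi-indices supported in `S` with entries at most `N` contains `T`.
  set S : Finset ℕ+ := T.biUnion fun α => α.support
  set N : ℕ := T.sup fun α => α.support.sup α
  have hT : T ⊆ S.finsupp fun _ => Finset.range (N + 1) := by
    intro α hα
    rw [Finset.mem_finsupp_iff]
    refine ⟨Finset.subset_biUnion_of_mem (fun α : MultiIndex => α.support) hα, fun j _ => ?_⟩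
    rw [Finset.mem_range, Nat.lt_succ_iff]
    by_cases hj : j ∈ α.support
    · exact (Finset.le_sup (f := α) hj).trans
        (Finset.le_sup (f := fun α : MultiIndex => α.support.sup α) hα)
    · simp [Finsupp.notMem_support_iff.mp hj]
  have hgeom : ∀ j, ∑ n ∈ Finset.range (N + 1), x j ^ n ≤ Real.exp (2 * x j) := by
    intro j
    have hlt : x j < 1 := (h1 j).trans_lt (by norm_num)
    have hs := (summable_geometric_of_lt_one (h0 j) hlt).sum_le_tsum (Finset.range (N + 1))
      fun n _ => pow_nonneg (h0 j) n
    rw [tsum_geometric_of_lt_one (h0 j) hlt] at hs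
    refine hs.trans ?_
    have h3 : (1 - x j)⁻¹ ≤ 2 * x j + 1 := by
      rw [inv_le_iff_one_le_mul₀ (by linarith)]
      nlinarith [h0 j, h1 j]
    exact h3.trans (Real.add_one_le_exp _)
  calc ∑ α ∈ T, α.prod (fun j n => x j ^ n)
      ≤ ∑ α ∈ S.finsupp fun _ => Finset.range (N + 1), α.prod (fun j n => x j ^ n) :=
        Finset.sum_le_sum_of_subset_of_nonneg hT fun α _ _ =>
          Finset.prod_nonneg fun j _ => pow_nonneg (h0 j) _
    _ = ∑ α ∈ S.finsupp fun _ => Finset.range (N + 1), ∏ j ∈ S, x j ^ α j := by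
        refine Finset.sum_congr rfl fun α hα => ?_
        exact Finsupp.prod_of_support_subset _ (Finset.mem_finsupp_iff.mp hα).1 _ (by simp)
    _ = ∏ j ∈ S, ∑ n ∈ Finset.range (N + 1), x j ^ n := by
        rw [Finset.prod_sum, Finset.finsupp, Finset.sum_map]
        refine Finset.sum_congr (by congr!) fun p _ => ?_
        rw [← Finset.prod_attach S]
        refine Finset.prod_congr rfl fun j _ => ?_
        simp [Finsupp.indicator_apply]
    _ ≤ ∏ j ∈ S, Real.exp (2 * x j) :=
        Finset.prod_le_prod (fun j _ => Finset.sum_nonneg fun n _ => pow_nonneg (h0 j) n)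
          fun j _ => hgeom j
    _ = Real.exp (2 * ∑ j ∈ S, x j) := by rw [← Real.exp_sum, Finset.mul_sum]
    _ ≤ Real.exp (2 * ∑' j, x j) := by
        gcongr
        exact hx.sum_le_tsum S fun j _ => h0 j

lemma summable_twoNpow_neg_two : Summable fun α : MultiIndex => twoNpow (-2) α := by
  simp only [twoNpow_eq_prod_pow]
  refine summable_finsupp_prod_pow (fun j => (Real.rpow_pos_of_pos (two_mul_pnat_pos j) _).le)
    (fun j => ?_) ?_
  · calc (2 * (j : ℝ)) ^ (-2 : ℝ) ≤ (2 : ℝ) ^ (-2 : ℝ) :=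
          Real.rpow_le_rpow_of_nonpos (by norm_num) (two_le_two_mul_pnat j) (by norm_num)
      _ ≤ 1 / 2 := by
          rw [Real.rpow_neg (by norm_num), Real.rpow_two]
          norm_num
  · have h : Summable fun n : ℕ => (2 : ℝ) ^ (-2 : ℝ) * (n : ℝ) ^ (-2 : ℝ) :=
      (Real.summable_nat_rpow.mpr (by norm_num)).mul_left _
    refine (h.comp_injective PNat.coe_injective).congr fun j => ?_
    rw [Real.mul_rpow (by norm_num) (by positivity)]
    rfl

lemma integral_fourier_haar (n : ℤ) :
    ∫ t : AddCircle (1 : ℝ), fourier n t ∂AddCircle.haarAddCircle = if n = 0 then 1 else 0 := by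
  split_ifs with h
  · simp [h]
  · exact MeasureTheory.integral_eq_zero_of_add_right_eq_neg
      (fun t => fourier_add_half_inv_index h (by norm_num) t)

/-- The point of the torus over the coordinates in `S` with radii `w` and angles `θ`;
its coordinates outside `S` vanish. -/
noncomputable def torusPoint (w : ℕ+ → ℝ) (S : Finset ℕ+) (θ : S → AddCircle (1 : ℝ)) : ℕ+ →₀ ℂ :=
  Finsupp.indicator S fun j hj => (w j : ℂ) * fourier 1 (θ ⟨j, hj⟩)

lemma torusPoint_mem (w : ℕ+ → ℝ) (S : Finset ℕ+) (θ : S → AddCircle (1 : ℝ)) (j : S) :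
    torusPoint w S θ j = (w j : ℂ) * fourier 1 (θ j) := by
  simp [torusPoint, Finsupp.indicator_apply]

lemma norm_torusPoint_le {w : ℕ+ → ℝ} (hw : ∀ j, 0 ≤ w j) (S : Finset ℕ+)
    (θ : S → AddCircle (1 : ℝ)) (j : ℕ+) : ‖torusPoint w S θ j‖ ≤ w j := by
  rw [torusPoint, Finsupp.indicator_apply]
  split_ifs with h
  · rw [norm_mul, fourier_apply, Circle.norm_coe, Complex.norm_real, Real.norm_of_nonneg (hw j),
      mul_one]
  · simpa using hw j

/-- On the torus, `z^β` is the character of exponent `β` scaled by `w^β`. -/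
lemma zpowM_torusPoint (w : ℕ+ → ℝ) (S : Finset ℕ+) (θ : S → AddCircle (1 : ℝ))
    {β : MultiIndex} (hβ : β.support ⊆ S) :
    zpowM (torusPoint w S θ) β =
      ((β.prod fun j n => w j ^ n : ℝ) : ℂ) * ∏ j : S, fourier (β j : ℤ) (θ j) := by
  rw [zpowM, Finsupp.prod_of_support_subset _ hβ _ (by simp),
    Finsupp.prod_of_support_subset _ hβ _ (by simp), ← Finset.prod_coe_sort S,
    ← Finset.prod_coe_sort S, Complex.ofReal_prod, ← Finset.prod_mul_distrib]
  refine Finset.prod_congr rfl fun j _ => ?_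
  rw [torusPoint_mem, mul_pow]
  simp [fourier_apply, AddCircle.toCircle_nsmul]

lemma zpowM_torusPoint_eq_zero (w : ℕ+ → ℝ) (S : Finset ℕ+) (θ : S → AddCircle (1 : ℝ))
    {β : MultiIndex} (hβ : ¬ β.support ⊆ S) : zpowM (torusPoint w S θ) β = 0 := by
  obtain ⟨j, hj, hjS⟩ := Finset.not_subset.mp hβ
  refine Finset.prod_eq_zero hj ?_
  beta_reduce
  rw [torusPoint, Finsupp.indicator_of_notMem hjS, zero_pow (Finsupp.mem_support_iff.mp hj)]

lemma norm_prod_fourier (S : Finset ℕ+) (n : S → ℤ) (θ : S → AddCircle (1 : ℝ)) :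
    ‖∏ j : S, fourier (n j) (θ j)‖ = 1 := by
  simp only [norm_prod, fourier_apply, Circle.norm_coe, Finset.prod_const_one]

/-- Cauchy's estimate for the coefficient of `z^α`, on the torus over the support of `α`. -/
lemma cauchy_estimate (c : MultiIndex → ℝ) {w : ℕ+ → ℝ} {M₀ : ℝ} (α : MultiIndex)
    (h : ∀ θ : α.support → AddCircle (1 : ℝ),
      (Summable fun β : MultiIndex => ‖(c β : ℂ) * zpowM (torusPoint w α.support θ) β‖) ∧
        ‖∑' β : MultiIndex, (c β : ℂ) * zpowM (torusPoint w α.support θ) β‖ ≤ M₀) :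
    |c α * α.prod fun j n => w j ^ n| ≤ M₀ := by
  classical
  set S := α.support with hS
  set W : MultiIndex → ℝ := fun β => β.prod fun j n => w j ^ n with hW
  let μ : MeasureTheory.Measure (S → AddCircle (1 : ℝ)) :=
    MeasureTheory.Measure.pi fun _ => AddCircle.haarAddCircle
  let F : MultiIndex → (S → AddCircle (1 : ℝ)) → ℂ := fun β θ =>
    (c β : ℂ) * zpowM (torusPoint w S θ) β * ∏ j : S, fourier (-(α j : ℤ)) (θ j)
  have hF : ∀ β, β.support ⊆ S → F β = fun θ =>
      ((c β * W β : ℝ) : ℂ) * ∏ j : S, fourier ((β j : ℤ) - α j) (θ j) := by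
    intro β hβ
    funext θ
    simp only [F, zpowM_torusPoint w S θ hβ, sub_eq_add_neg, fourier_add, Finset.prod_mul_distrib]
    push_cast
    ring
  have hF0 : ∀ β, ¬ β.support ⊆ S → F β = fun _ => 0 := by
    intro β hβ
    funext θ
    simp [F, zpowM_torusPoint_eq_zero w S θ hβ]
  have hcont : ∀ β, Continuous (F β) := by
    intro β
    by_cases hβ : β.support ⊆ S
    · rw [hF β hβ]; fun_prop
    · rw [hF0 β hβ]; fun_prop
  have hint : ∀ β, MeasureTheory.Integrable (F β) μ := fun β =>
    (hcont β).integrable_of_hasCompactSupport (HasCompactSupport.of_compactSpace _)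
  have hnorm : ∀ β θ, ‖F β θ‖ = ‖(c β : ℂ) * zpowM (torusPoint w S 0) β‖ := by
    intro β θ
    simp only [F, norm_mul _ (∏ j : S, _), norm_prod_fourier, mul_one]
    by_cases hβ : β.support ⊆ S
    · simp only [zpowM_torusPoint w S _ hβ, norm_mul, norm_prod_fourier]
    · simp only [zpowM_torusPoint_eq_zero w S _ hβ]
  have hsum : Summable fun β => ∫ θ, ‖F β θ‖ ∂μ := by
    simpa [hnorm] using (h 0).1
  have key := MeasureTheory.hasSum_integral_of_summable_integral_norm hint hsum
  -- Orthogonality of characters: only the term `β = α` survives the integration.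
  have hval : ∀ β, ∫ θ, F β θ ∂μ = if β = α then ((c α * W α : ℝ) : ℂ) else 0 := by
    intro β
    by_cases hβ : β.support ⊆ S
    · rw [hF β hβ, MeasureTheory.integral_const_mul,
        MeasureTheory.integral_fintype_prod_eq_prod
          (fun (j : S) (t : AddCircle (1 : ℝ)) => (fourier ((β j : ℤ) - α j) t : ℂ))]
      simp only [integral_fourier_haar]
      split_ifs with hαβ
      · subst hαβ; simp
      · obtain ⟨j, hj⟩ := DFunLike.ne_iff.mp hαβ
        have hjS : j ∈ S := by
          by_contra hjS
          exact hj (by rw [Finsupp.notMem_support_iff.mp hjS,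
            Finsupp.notMem_support_iff.mp fun h' => hjS (hβ h')])
        rw [Finset.prod_eq_zero (Finset.mem_univ (⟨j, hjS⟩ : S)), mul_zero]
        rw [if_neg]
        simpa [sub_eq_zero] using hj
    · rw [hF0 β hβ, if_neg (by rintro rfl; exact hβ subset_rfl)]
      simp
  have heq : ((c α * W α : ℝ) : ℂ) = ∫ θ, ∑' β, F β θ ∂μ := by
    rw [← key.tsum_eq]
    simp only [hval, tsum_ite_eq]
  rw [← Real.norm_eq_abs, ← Complex.norm_real, heq]
  refine (MeasureTheory.norm_integral_le_of_norm_le_const (C := M₀)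
    (Filter.Eventually.of_forall fun θ => ?_)).trans (by simp)
  simp only [F]
  rw [tsum_mul_right, norm_mul, norm_prod_fourier, mul_one]
  exact (h θ).2

/-- Characterization theorem: a power series in infinitely many complex variables
that converges absolutely and is bounded on the neighborhood `B_q(δ)` is the
Hermite transform of a Kondratiev distribution. -/
theorem hermite_transform_characterization
    (c : MultiIndex → ℝ) (q : ℝ) (hq : 0 < q) (δ : ℝ) (hδ : 0 < δ)
    (M₀ : ℝ) (hM₀ : 0 ≤ M₀)
    (hbound : ∀ z : ℕ+ →₀ ℂ,
      (Summable fun α : {α : MultiIndex // α ≠ 0} =>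
        ‖zpowM z α.1‖ ^ 2 * twoNpow q α.1) →
      (∑' α : {α : MultiIndex // α ≠ 0},
        ‖zpowM z α.1‖ ^ 2 * twoNpow q α.1) < δ ^ 2 →
      (Summable fun α : MultiIndex => ‖(c α : ℂ) * zpowM z α‖) ∧
        ‖∑' α : MultiIndex, (c α : ℂ) * zpowM z α‖ ≤ M₀) :
    ∃ r : ℝ, 0 < r ∧ Summable fun α : MultiIndex => c α ^ 2 * twoNpow (-r) α := by
  set C : ℝ := ∑' α : MultiIndex, twoNpow (-2) α with hC
  have hsub : Summable fun α : {α : MultiIndex // α ≠ 0} => twoNpow (-2) α.1 :=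
    summable_twoNpow_neg_two.subtype _
  have hCsub : ∑' α : {α : MultiIndex // α ≠ 0}, twoNpow (-2) α.1 ≤ C :=
    Summable.tsum_subtype_le _ {α : MultiIndex | α ≠ 0} (fun α => (twoNpow_pos _ α).le)
      summable_twoNpow_neg_two
  obtain ⟨m, hm⟩ : ∃ m : ℕ, (2 : ℝ) ^ (-(m : ℝ)) * C < δ ^ 2 := by
    have h1 : Filter.Tendsto (fun m : ℕ => (1 / 2 : ℝ) ^ m * C) Filter.atTop (nhds (0 * C)) :=
      (tendsto_pow_atTop_nhds_zero_of_lt_one (by norm_num) (by norm_num)).mul_const C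
    rw [zero_mul] at h1
    obtain ⟨m, hm⟩ := (h1.eventually (gt_mem_nhds (by positivity : (0 : ℝ) < δ ^ 2))).exists
    refine ⟨m, ?_⟩
    rwa [Real.rpow_neg (by norm_num), Real.rpow_natCast, ← inv_pow, ← one_div]
  -- The exponent is chosen so that `q - 2s = -2 - m`.
  set s : ℝ := (q + 2 + m) / 2 with hs
  have hw0 : ∀ j : ℕ+, 0 ≤ (2 * (j : ℝ)) ^ (-s) := fun j =>
    (Real.rpow_pos_of_pos (two_mul_pnat_pos j) _).le
  have hcoef : ∀ α : MultiIndex, |c α * twoNpow (-s) α| ≤ M₀ := by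
    intro α
    rw [twoNpow_eq_prod_pow]
    refine cauchy_estimate c α fun θ => ?_
    set z := torusPoint (fun j => (2 * (j : ℝ)) ^ (-s)) α.support θ
    have hz : ∀ β, ‖zpowM z β‖ ≤ twoNpow (-s) β := by
      intro β
      rw [twoNpow_eq_prod_pow, zpowM, Finsupp.prod, norm_prod]
      refine Finset.prod_le_prod (fun j _ => norm_nonneg _) fun j _ => ?_
      rw [norm_pow]
      exact pow_le_pow_left₀ (norm_nonneg _) (norm_torusPoint_le hw0 _ θ j) _
    have hterm : ∀ β : {β : MultiIndex // β ≠ 0},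
        ‖zpowM z β.1‖ ^ 2 * twoNpow q β.1 ≤ (2 : ℝ) ^ (-(m : ℝ)) * twoNpow (-2) β.1 := by
      intro β
      calc ‖zpowM z β.1‖ ^ 2 * twoNpow q β.1
          ≤ twoNpow (-s) β.1 ^ 2 * twoNpow q β.1 := by
            have := (twoNpow_pos q β.1).le
            gcongr
            exact hz β.1
        _ = twoNpow (-(m : ℝ)) β.1 * twoNpow (-2) β.1 := by
            rw [pow_two, ← twoNpow_add, ← twoNpow_add, ← twoNpow_add]
            congr 1
            rw [hs]; ring
        _ ≤ _ := mul_le_mul_of_nonneg_right (twoNpow_neg_le (Nat.cast_nonneg m) β.2)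
            (twoNpow_pos _ _).le
    have hsummable : Summable fun β : {β : MultiIndex // β ≠ 0} =>
        ‖zpowM z β.1‖ ^ 2 * twoNpow q β.1 :=
      Summable.of_nonneg_of_le
        (fun β => mul_nonneg (sq_nonneg _) (twoNpow_pos _ _).le) hterm (hsub.mul_left _)
    refine hbound z hsummable ?_
    calc _ ≤ ∑' β : {β : MultiIndex // β ≠ 0}, (2 : ℝ) ^ (-(m : ℝ)) * twoNpow (-2) β.1 :=
          hsummable.tsum_le_tsum hterm (hsub.mul_left _)
      _ = (2 : ℝ) ^ (-(m : ℝ)) * ∑' β : {β : MultiIndex // β ≠ 0}, twoNpow (-2) β.1 :=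
          tsum_mul_left
      _ ≤ (2 : ℝ) ^ (-(m : ℝ)) * C := by gcongr
      _ < δ ^ 2 := hm
  refine ⟨2 * s + 2, by positivity, ?_⟩
  refine Summable.of_nonneg_of_le (fun α => mul_nonneg (sq_nonneg _) (twoNpow_pos _ _).le)
    (fun α => ?_) (summable_twoNpow_neg_two.mul_left (M₀ ^ 2))
  have h2 : (c α * twoNpow (-s) α) ^ 2 ≤ M₀ ^ 2 := by
    rw [← sq_abs]
    exact pow_le_pow_left₀ (abs_nonneg _) (hcoef α) 2
  calc c α ^ 2 * twoNpow (-(2 * s + 2)) α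
      = (c α * twoNpow (-s) α) ^ 2 * twoNpow (-2) α := by
        rw [show -(2 * s + 2) = -s + -s + -2 by ring, twoNpow_add, twoNpow_add]
        ring
    _ ≤ M₀ ^ 2 * twoNpow (-2) α := mul_le_mul_of_nonneg_right h2 (twoNpow_pos _ _).le
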